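/- Let F : ℝⁿ → ℝ be convex and let (u_i)_{i∈ℕ} be a bounded sequence in ℝⁿ such that for each i there is a subgradient a_i of F at u_i with the following property: for all i' < i'', if F(u_{i'}) > 0 then F(u_{i'}) + ⟨a_{i'}, u_{i''} − u_{i'}⟩ ≤ 0. Then every limit point ū of (u_i) satisfies F(ū) ≤ 0. -/

import Mathlib

open scoped InnerProductSpace

/-!
Suppose `F p > 0` at a limit point `p` of `u`. Each cut is a closed half-space containing all later
iterates, so it contains `p` as well. At an iterate `y = u i` with `F y > 0`, the subgradient `a`
then satisfies `a (p - y) ≤ -F y`, so the subgradient inequality at the reflection `y + (y - p)` of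
`p` through `y` gives `2 * F y ≤ F (y + (y - p))`. Along iterates `y` approaching `p` the reflection
also approaches `p`, and continuity of `F` yields `2 * F p ≤ F p`, a contradiction.
-/

open Filter Topology

theorem mem_of_isClosed_of_mapClusterPt {X ι : Type*} [TopologicalSpace X] {s : Set X} {p : X}
    {l : Filter ι} {u : ι → X} (hs : IsClosed s) (hp : MapClusterPt p l u)
    (hu : ∀ᶠ i in l, u i ∈ s) : p ∈ s :=
  isClosed_iff_clusterPt.mp hs p (hp.clusterPt.mono (le_principal_iff.mpr hu))

theorem eventually_apply_reflection_lt_two_mul {E : Type*} [AddGroup E] [TopologicalSpace E]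
    [IsTopologicalAddGroup E] {F : E → ℝ} {p : E} (hF : ContinuousAt F p) (hp : 0 < F p) :
    ∀ᶠ y in 𝓝 p, F (y + (y - p)) < 2 * F y := by
  have reflection_tendsto : Tendsto (fun y ↦ y + (y - p)) (𝓝 p) (𝓝 p) :=
    Continuous.tendsto' (by fun_prop) _ _ (by simp)
  exact (hF.tendsto.comp reflection_tendsto).eventually_lt (hF.tendsto.const_mul 2) (by linarith)

section Subgradient

variable {E : Type*} [AddCommGroup E] [Module ℝ E] [TopologicalSpace E]

/-- `a` is a subgradient of `F` at `y`. Subgradients are encoded as continuous linear functionals,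
so that no inner product is required; a vector `c` of an inner product space is represented by
`innerSL ℝ c`. -/
def IsSubgradientAt (F : E → ℝ) (a : E →L[ℝ] ℝ) (y : E) : Prop :=
  ∀ x, a (x - y) ≤ F x - F y

theorem IsSubgradientAt.two_mul_le_apply_reflection {F : E → ℝ} {a : E →L[ℝ] ℝ} {y p : E}
    (ha : IsSubgradientAt F a y) (hp : F y + a (p - y) ≤ 0) :
    2 * F y ≤ F (y + (y - p)) := by
  have at_reflection : -a (p - y) ≤ F (y + (y - p)) - F y := by
    simpa only [add_sub_cancel_left, ← map_neg, neg_sub] using ha (y + (y - p))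
  linarith

theorem stmt_11_general [IsTopologicalAddGroup E] {ι : Type*} {l : Filter ι} {F : E → ℝ}
    {u : ι → E} {a : ι → E →L[ℝ] ℝ} {p : E} (hF : ContinuousAt F p)
    (ha : ∀ i, IsSubgradientAt F (a i) (u i))
    (hcut : ∀ i, 0 < F (u i) → ∀ᶠ j in l, F (u i) + a i (u j - u i) ≤ 0)
    (hp : MapClusterPt p l u) : F p ≤ 0 := by
  by_contra! hFp
  obtain ⟨i, hi_pos, hi_lt⟩ : ∃ i, 0 < F (u i) ∧ F (u i + (u i - p)) < 2 * F (u i) :=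
    (hp.frequently ((hF.eventually_const_lt hFp).and
      (eventually_apply_reflection_lt_two_mul hF hFp))).exists
  have cut_isClosed : IsClosed {x | F (u i) + a i (x - u i) ≤ 0} :=
    isClosed_le (by fun_prop) continuous_const
  have p_mem_cut : p ∈ {x | F (u i) + a i (x - u i) ≤ 0} :=
    mem_of_isClosed_of_mapClusterPt cut_isClosed hp (hcut i hi_pos)
  exact hi_lt.not_ge ((ha i).two_mul_le_apply_reflection p_mem_cut)

end Subgradient

/-- Lemma 1.2.3-type result: every limit point of the iterates is feasible
(`F(ū) ≤ 0`). -/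
theorem stmt_11 {n : ℕ}
    (F : EuclideanSpace ℝ (Fin n) → ℝ) (hF : ConvexOn ℝ Set.univ F)
    (u : ℕ → EuclideanSpace ℝ (Fin n))
    (hbd : Bornology.IsBounded (Set.range u))
    (a : ℕ → EuclideanSpace ℝ (Fin n))
    (ha : ∀ i, ∀ x : EuclideanSpace ℝ (Fin n), ⟪a i, x - u i⟫_ℝ ≤ F x - F (u i))
    (hcut : ∀ i' i'' : ℕ, i' < i'' → 0 < F (u i') →
        F (u i') + ⟪a i', u i'' - u i'⟫_ℝ ≤ 0)
    (ubar : EuclideanSpace ℝ (Fin n))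
    (hlim : ∃ φ : ℕ → ℕ, StrictMono φ ∧
        Filter.Tendsto (u ∘ φ) Filter.atTop (nhds ubar)) :
    F ubar ≤ 0 := by
  obtain ⟨φ, hφ, hu⟩ := hlim
  exact stmt_11_general (a := fun i ↦ innerSL ℝ (a i)) hF.locallyLipschitz.continuous.continuousAt
    ha (fun i hi ↦ (eventually_gt_atTop i).mono fun j hij ↦ hcut i j hij hi)
    (.of_comp hφ.tendsto_atTop hu.mapClusterPt)
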